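/- Let α ∈ ℝ and d ∈ ℕ. There exists a constant ψ(d,α) > 0, depending only on d and α, with the following property. For any f, g ∈ D_α, both not identically 0, let p_d(f) and p_d(g) be the d-th optimal polynomial approximants to 1/f and 1/g respectively, let M(f), M(g) be the (d+1)×(d+1) matrices with entries ⟨S^k f, S^j f⟩_α and ⟨S^k g, S^j g⟩_α (these matrices are invertible), and let b(f), b(g) ∈ ℂ^{d+1} have entries ⟨1, S^j f⟩_α and ⟨1, S^j g⟩_α. Then ‖p_d(g) − p_d(f)‖_α ≤ ψ(d,α)·‖M(g)^{−1}‖_F·( ‖b(g) − b(f)‖ + ‖M(f)^{−1}‖_F·‖M(f) − M(g)‖_F·‖b(f)‖ ), where ‖·‖_F is the standard (unweighted) Frobenius norm on matrices and ‖·‖ the Euclidean norm on ℂ^{d+1}. -/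

import Mathlib

open Filter Topology

noncomputable section

/-- Membership in the Dirichlet-type space `D_α`, described via Taylor coefficients. -/
def MemD (α : ℝ) (a : ℕ → ℂ) : Prop :=
  Summable (fun k : ℕ => ‖a k‖ ^ 2 * ((k : ℝ) + 1) ^ α)

/-- The norm of `D_α`, on coefficient sequences. -/
def DNorm (α : ℝ) (a : ℕ → ℂ) : ℝ :=
  Real.sqrt (∑' k : ℕ, ‖a k‖ ^ 2 * ((k : ℝ) + 1) ^ α)

/-- The inner product of `D_α`, on coefficient sequences. -/
def Dinner (α : ℝ) (a b : ℕ → ℂ) : ℂ :=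
  ∑' k : ℕ, a k * (starRingEnd ℂ) (b k) * ((((k : ℝ) + 1) ^ α : ℝ) : ℂ)

/-- Cauchy product of coefficient sequences (coefficients of the product function). -/
def mulCoeff (a b : ℕ → ℂ) : ℕ → ℂ :=
  fun k => ∑ i ∈ Finset.range (k + 1), a i * b (k - i)

/-- Coefficient sequence of the constant function `1`. -/
def oneCoeff : ℕ → ℂ := fun k => if k = 0 then 1 else 0

/-- `f` is cyclic for (the shift operator on) `D_α`: there are polynomials `p n` with
`‖p n · f - 1‖_α → 0`. -/
def Cyclic (α : ℝ) (f : ℕ → ℂ) : Prop :=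
  ∃ p : ℕ → Polynomial ℂ,
    Tendsto (fun n => DNorm α (fun k => mulCoeff (p n).coeff f k - oneCoeff k)) atTop (𝓝 0)

/-- Coefficients of `S^t f`, where `S` is the shift operator `(Sf)(z) = z f(z)`. -/
def shiftPow (t : ℕ) (a : ℕ → ℂ) : ℕ → ℂ :=
  fun k => if k < t then 0 else a (k - t)

/-- Operator norm of `S^t` on `D_α`. -/
def shiftOpNorm (α : ℝ) (t : ℕ) : ℝ :=
  sSup {r : ℝ | ∃ a : ℕ → ℂ, MemD α a ∧ DNorm α a ≤ 1 ∧ r = DNorm α (shiftPow t a)}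

/-- `p` is a `d`-th optimal polynomial approximant to `1/f` in `D_α`. -/
def IsOPA (α : ℝ) (f : ℕ → ℂ) (d : ℕ) (p : Polynomial ℂ) : Prop :=
  p.natDegree ≤ d ∧
    ∀ q : Polynomial ℂ, q.natDegree ≤ d →
      DNorm α (fun k => mulCoeff p.coeff f k - oneCoeff k) ≤
        DNorm α (fun k => mulCoeff q.coeff f k - oneCoeff k)

/-- The matrix `M` of the linear system determining the `d`-th o.p.a. to `1/f`:
`m_{j,k} = ⟨S^k f, S^j f⟩_α`. -/
def opaMatrix (α : ℝ) (d : ℕ) (f : ℕ → ℂ) : Matrix (Fin (d + 1)) (Fin (d + 1)) ℂ :=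
  Matrix.of fun j k => Dinner α (shiftPow (k : ℕ) f) (shiftPow (j : ℕ) f)

/-- The vector `b` of the linear system determining the `d`-th o.p.a. to `1/f`:
`b_j = ⟨1, S^j f⟩_α`. -/
def opaVec (α : ℝ) (d : ℕ) (f : ℕ → ℂ) : Fin (d + 1) → ℂ :=
  fun j => Dinner α oneCoeff (shiftPow (j : ℕ) f)

/-- Frobenius norm of a complex matrix. -/
def frobNorm {m n : ℕ} (M : Matrix (Fin m) (Fin n) ℂ) : ℝ :=
  Real.sqrt (∑ j, ∑ k, ‖M j k‖ ^ 2)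

/-- Euclidean norm on `ℂ^m`. -/
def euclNorm {m : ℕ} (v : Fin m → ℂ) : ℝ :=
  Real.sqrt (∑ j, ‖v j‖ ^ 2)

/-- `α`-weighted Frobenius norm: the Frobenius norm of the matrix in the orthonormal
basis `{z^k/(k+1)^{α/2}}` of the map whose matrix in `{z^k}` is `M`. -/
def wFrobNorm (α : ℝ) {m : ℕ} (M : Matrix (Fin m) (Fin m) ℂ) : ℝ :=
  Real.sqrt (∑ j, ∑ k, ‖M j k‖ ^ 2 * (((j : ℕ) : ℝ) + 1) ^ α * (((k : ℕ) : ℝ) + 1) ^ (-α))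

/-- Coefficients of the reproducing kernel of `D_α` at `w ∈ 𝔻`. -/
def kern (α : ℝ) (w : ℂ) : ℕ → ℂ :=
  fun k => (starRingEnd ℂ) w ^ k / ((((k : ℝ) + 1) ^ α : ℝ) : ℂ)

/-!
With `v j = S^j f`, the matrix `M(f)` is the Gram matrix of `v` and `b(f) j = ⟨1, v j⟩`, so the
coefficient vector of the optimal approximant, being the solution of a least-squares problem,
satisfies the normal equations `M(f) c = b(f)`. Since formal power series form an integral domain,
the shifts of `f ≠ 0` are linearly independent and `M(f)` is invertible. If `A x = b` and `B y = c`
then `y - x = B⁻¹ ((c - b) + (A - B) A⁻¹ b)`, which gives the estimate in the Euclidean norm of the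
coefficients; on polynomials of degree at most `d` that norm controls `‖·‖_α`.
-/

section LinearSystems

open Matrix WithLp
open scoped Matrix.Norms.Frobenius

theorem norm_toLp_mulVec_le {𝕜 m n : Type*} [RCLike 𝕜] [Fintype m] [Fintype n]
    (A : Matrix m n 𝕜) (v : n → 𝕜) : ‖toLp 2 (A *ᵥ v)‖ ≤ ‖A‖ * ‖toLp 2 v‖ := by
  simpa only [← replicateCol_mulVec, frobenius_norm_replicateCol] using
    frobenius_norm_mul A (replicateCol Unit v)

variable {n : Type*} [Fintype n] [DecidableEq n]

theorem eq_inv_mulVec_of_mulVec_eq {R : Type*} [CommRing R] {A : Matrix n n R} (hA : IsUnit A.det)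
    {x b : n → R} (h : A *ᵥ x = b) : x = A⁻¹ *ᵥ b := by
  rw [← h, mulVec_mulVec, nonsing_inv_mul A hA, one_mulVec]

theorem sub_eq_inv_mulVec_of_mulVec_eq {R : Type*} [CommRing R] {A B : Matrix n n R}
    (hB : IsUnit B.det) {x y b c : n → R} (hx : A *ᵥ x = b) (hy : B *ᵥ y = c) :
    y - x = B⁻¹ *ᵥ (c - b + (A - B) *ᵥ x) := by
  refine eq_inv_mulVec_of_mulVec_eq hB ?_
  rw [mulVec_sub, sub_mulVec, hx, hy]
  abel

theorem norm_toLp_sub_le_of_mulVec_eq {𝕜 : Type*} [RCLike 𝕜] {A B : Matrix n n 𝕜}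
    (hA : IsUnit A.det) (hB : IsUnit B.det) {x y b c : n → 𝕜}
    (hx : A *ᵥ x = b) (hy : B *ᵥ y = c) :
    ‖toLp 2 (y - x)‖ ≤
      ‖B⁻¹‖ * (‖toLp 2 (c - b)‖ + ‖A⁻¹‖ * ‖A - B‖ * ‖toLp 2 b‖) := by
  have hx_norm : ‖toLp 2 x‖ ≤ ‖A⁻¹‖ * ‖toLp 2 b‖ :=
    eq_inv_mulVec_of_mulVec_eq hA hx ▸ norm_toLp_mulVec_le A⁻¹ b
  calc ‖toLp 2 (y - x)‖ = ‖toLp 2 (B⁻¹ *ᵥ (c - b + (A - B) *ᵥ x))‖ := by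
        rw [sub_eq_inv_mulVec_of_mulVec_eq hB hx hy]
    _ ≤ ‖B⁻¹‖ * ‖toLp 2 (c - b) + toLp 2 ((A - B) *ᵥ x)‖ := norm_toLp_mulVec_le _ _
    _ ≤ ‖B⁻¹‖ * (‖toLp 2 (c - b)‖ + ‖A - B‖ * (‖A⁻¹‖ * ‖toLp 2 b‖)) := by
        gcongr
        refine (norm_add_le _ _).trans ?_
        gcongr
        exact (norm_toLp_mulVec_le _ _).trans (by gcongr)
    _ = ‖B⁻¹‖ * (‖toLp 2 (c - b)‖ + ‖A⁻¹‖ * ‖A - B‖ * ‖toLp 2 b‖) := by ring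

theorem frobNorm_eq_norm {m n : ℕ} (M : Matrix (Fin m) (Fin n) ℂ) : frobNorm M = ‖M‖ := by
  simp [frobNorm, frobenius_norm_def, Real.sqrt_eq_rpow]

theorem euclNorm_eq_norm {m : ℕ} (v : Fin m → ℂ) : euclNorm v = ‖toLp 2 v‖ := by
  rw [EuclideanSpace.norm_eq, euclNorm]

theorem euclNorm_sub_le_of_mulVec_eq {m : ℕ} {A B : Matrix (Fin m) (Fin m) ℂ}
    (hA : IsUnit A.det) (hB : IsUnit B.det) {x y b c : Fin m → ℂ}
    (hx : A *ᵥ x = b) (hy : B *ᵥ y = c) :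
    euclNorm (y - x) ≤
      frobNorm B⁻¹ * (euclNorm (c - b) + frobNorm A⁻¹ * frobNorm (A - B) * euclNorm b) := by
  simpa only [frobNorm_eq_norm, euclNorm_eq_norm] using norm_toLp_sub_le_of_mulVec_eq hA hB hx hy

end LinearSystems

section LeastSquares

variable {𝕜 E ι : Type*} [RCLike 𝕜] [NormedAddCommGroup E] [InnerProductSpace 𝕜 E]

theorem inner_sub_eq_zero_of_forall_norm_sub_le {K : Submodule 𝕜 E} {u e : E} (hu : u ∈ K)
    (hmin : ∀ w ∈ K, ‖u - e‖ ≤ ‖w - e‖) {w : E} (hw : w ∈ K) : inner 𝕜 w (u - e) = 0 := by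
  have hinf : ‖e - u‖ = ⨅ w : K, ‖e - w‖ := by
    refine le_antisymm (le_ciInf fun w => ?_) (ciInf_le ⟨0, ?_⟩ (⟨u, hu⟩ : K))
    · simpa only [norm_sub_rev e] using hmin w w.2
    · rintro _ ⟨w, rfl⟩
      exact norm_nonneg _
  have horth := (K.norm_eq_iInf_iff_inner_eq_zero hu).1 hinf w hw
  rw [← neg_sub, inner_neg_right, inner_eq_zero_symm.1 horth, neg_zero]

theorem gram_mulVec_eq_of_forall_norm_sub_le [Fintype ι] {v : ι → E} {e : E} {c : ι → 𝕜}
    (hmin : ∀ c' : ι → 𝕜, ‖∑ i, c i • v i - e‖ ≤ ‖∑ i, c' i • v i - e‖) :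
    (Matrix.gram 𝕜 v).mulVec c = fun i => inner 𝕜 (v i) e := by
  have hspan : ∀ w ∈ Submodule.span 𝕜 (Set.range v), ‖∑ i, c i • v i - e‖ ≤ ‖w - e‖ := by
    intro w hw
    obtain ⟨c', rfl⟩ := (Submodule.mem_span_range_iff_exists_fun 𝕜).1 hw
    exact hmin c'
  ext i
  have horth : inner 𝕜 (v i) (∑ j, c j • v j - e) = 0 :=
    inner_sub_eq_zero_of_forall_norm_sub_le
      ((Submodule.mem_span_range_iff_exists_fun 𝕜).2 ⟨c, rfl⟩) hspan
      (Submodule.subset_span (Set.mem_range_self i))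
  rw [inner_sub_right, sub_eq_zero] at horth
  simp only [← horth, inner_sum, inner_smul_right, Matrix.mulVec, dotProduct, Matrix.gram_apply,
    mul_comm]

end LeastSquares

section Weights

theorem rpow_le_rpow_abs_mul_rpow {x y z : ℝ} (hx : 0 < x) (hxz : x ≤ z) (hzy : z ≤ y * x)
    (α : ℝ) : z ^ α ≤ y ^ |α| * x ^ α := by
  have hone : 1 ≤ z / x := (one_le_div hx).2 hxz
  calc z ^ α = (z / x) ^ α * x ^ α := by
        rw [← Real.mul_rpow (by positivity) hx.le, div_mul_cancel₀ z hx.ne']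
    _ ≤ (z / x) ^ |α| * x ^ α := by
        gcongr
        exact le_abs_self α
    _ ≤ y ^ |α| * x ^ α := by
        gcongr
        exact (div_le_iff₀ hx).2 hzy

theorem dNorm_le_of_forall_ge_eq_zero (α : ℝ) {n : ℕ} {a : ℕ → ℂ} (ha : ∀ k ≥ n, a k = 0) :
    DNorm α a ≤ √((n : ℝ) ^ |α|) * euclNorm fun j : Fin n => a j := by
  rw [DNorm, euclNorm, ← Real.sqrt_mul (by positivity), tsum_eq_sum (s := Finset.range n),
    Fin.sum_univ_eq_sum_range (fun k => ‖a k‖ ^ 2), Finset.mul_sum]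
  · refine Real.sqrt_le_sqrt (Finset.sum_le_sum fun k hk => ?_)
    have hkn : (k : ℝ) + 1 ≤ n := by exact_mod_cast Finset.mem_range.1 hk
    have hweight : ((k : ℝ) + 1) ^ α ≤ (n : ℝ) ^ |α| := by
      simpa using rpow_le_rpow_abs_mul_rpow one_pos (by simp) (by simpa using hkn) α
    rw [mul_comm]
    gcongr
  · intro k hk
    simp [ha k (by simpa using hk)]

end Weights

section DirichletSpace

/-- The linear map `a k ↦ (k + 1)^(α / 2) a k`, which carries the norm of `D_α` to that of `ℓ²`. -/
def sqrtWeight (α : ℝ) : (ℕ → ℂ) →ₗ[ℂ] (ℕ → ℂ) :=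
  LinearMap.mulLeft ℂ fun k => ((√(((k : ℝ) + 1) ^ α) : ℝ) : ℂ)

theorem sqrtWeight_apply (α : ℝ) (a : ℕ → ℂ) (k : ℕ) :
    sqrtWeight α a k = ((√(((k : ℝ) + 1) ^ α) : ℝ) : ℂ) * a k := rfl

theorem sqrtWeight_injective (α : ℝ) : Function.Injective (sqrtWeight α) := by
  intro a b hab
  ext k
  have hk : ((√(((k : ℝ) + 1) ^ α) : ℝ) : ℂ) ≠ 0 := by
    rw [Complex.ofReal_ne_zero]
    positivity
  exact mul_left_cancel₀ hk (congrFun hab k)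

theorem norm_sqrtWeight_sq (α : ℝ) (a : ℕ → ℂ) (k : ℕ) :
    ‖sqrtWeight α a k‖ ^ 2 = ‖a k‖ ^ 2 * ((k : ℝ) + 1) ^ α := by
  rw [sqrtWeight_apply, norm_mul, mul_pow, Complex.norm_real, Real.norm_of_nonneg (by positivity),
    Real.sq_sqrt (by positivity), mul_comm]

theorem memℓp_sqrtWeight_iff {α : ℝ} {a : ℕ → ℂ} : Memℓp (sqrtWeight α a) 2 ↔ MemD α a := by
  rw [memℓp_gen_iff (by norm_num), MemD]
  simp [norm_sqrtWeight_sq]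

/-- The space `D_α` as a linear subspace of the space of coefficient sequences. -/
def dirichletSpace (α : ℝ) : Submodule ℂ (ℕ → ℂ) where
  carrier := {a | MemD α a}
  zero_mem' := memℓp_sqrtWeight_iff.1 (by simpa using zero_memℓp)
  add_mem' ha hb := memℓp_sqrtWeight_iff.1 <| by
    simpa using (memℓp_sqrtWeight_iff.2 ha).add (memℓp_sqrtWeight_iff.2 hb)
  smul_mem' c a ha := memℓp_sqrtWeight_iff.1 <| by
    simpa using (memℓp_sqrtWeight_iff.2 ha).const_smul c

/-- The isometric embedding of `D_α` into `ℓ²` given by `sqrtWeight`, through which Hilbert space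
theory applies to `Dinner` and `DNorm`. -/
def toEll2 (α : ℝ) : dirichletSpace α →ₗ[ℂ] lp (fun _ : ℕ => ℂ) 2 where
  toFun a := ⟨sqrtWeight α a, memℓp_sqrtWeight_iff.2 a.2⟩
  map_add' a b := Subtype.ext (map_add (sqrtWeight α) (a : ℕ → ℂ) b)
  map_smul' c a := Subtype.ext (map_smul (sqrtWeight α) c (a : ℕ → ℂ))

theorem toEll2_apply (α : ℝ) (a : dirichletSpace α) (k : ℕ) :
    toEll2 α a k = sqrtWeight α a k := rfl

theorem toEll2_injective (α : ℝ) : Function.Injective (toEll2 α) := fun _ _ h =>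
  Subtype.ext (sqrtWeight_injective α (congrArg Subtype.val h))

theorem norm_toEll2 (α : ℝ) (a : dirichletSpace α) : ‖toEll2 α a‖ = DNorm α a := by
  rw [lp.norm_eq_tsum_rpow (by norm_num), DNorm, Real.sqrt_eq_rpow]
  simp [toEll2_apply, norm_sqrtWeight_sq]

theorem inner_toEll2 (α : ℝ) (a b : dirichletSpace α) :
    inner ℂ (toEll2 α a) (toEll2 α b) = Dinner α b a := by
  rw [lp.inner_eq_tsum, Dinner]
  refine tsum_congr fun k => ?_
  have hsq : (((((k : ℝ) + 1) ^ α : ℝ)) : ℂ) =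
      ((√(((k : ℝ) + 1) ^ α) : ℝ) : ℂ) * ((√(((k : ℝ) + 1) ^ α) : ℝ) : ℂ) := by
    rw [← Complex.ofReal_mul, Real.mul_self_sqrt (by positivity)]
  rw [RCLike.inner_apply, toEll2_apply, toEll2_apply, sqrtWeight_apply, sqrtWeight_apply, map_mul,
    Complex.conj_ofReal, hsq]
  ring

theorem memD_oneCoeff (α : ℝ) : MemD α oneCoeff := by
  refine summable_of_ne_finset_zero (s := {0}) fun k hk => ?_
  simp [oneCoeff, Finset.notMem_singleton.1 hk]

theorem memD_shiftPow {α : ℝ} {a : ℕ → ℂ} (ha : MemD α a) (t : ℕ) : MemD α (shiftPow t a) := by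
  rw [MemD, ← summable_nat_add_iff t]
  refine Summable.of_nonneg_of_le (fun k => by positivity) (fun k => ?_)
    (ha.mul_left (((t : ℝ) + 1) ^ |α|))
  have hweight : (((k + t : ℕ) : ℝ) + 1) ^ α ≤ ((t : ℝ) + 1) ^ |α| * ((k : ℝ) + 1) ^ α := by
    refine rpow_le_rpow_abs_mul_rpow (by positivity) ?_ ?_ α
    · gcongr
      exact Nat.le_add_right k t
    · exact_mod_cast (by nlinarith : k + t + 1 ≤ (t + 1) * (k + 1))
  calc ‖shiftPow t a (k + t)‖ ^ 2 * (((k + t : ℕ) : ℝ) + 1) ^ α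
      = ‖a k‖ ^ 2 * (((k + t : ℕ) : ℝ) + 1) ^ α := by simp [shiftPow]
    _ ≤ ‖a k‖ ^ 2 * (((t : ℝ) + 1) ^ |α| * ((k : ℝ) + 1) ^ α) := by gcongr
    _ = ((t : ℝ) + 1) ^ |α| * (‖a k‖ ^ 2 * ((k : ℝ) + 1) ^ α) := by ring

end DirichletSpace

section PolynomialMultiples

open Polynomial

theorem mk_mulCoeff (a b : ℕ → ℂ) :
    PowerSeries.mk (mulCoeff a b) = PowerSeries.mk a * PowerSeries.mk b := by
  ext k
  rw [PowerSeries.coeff_mul, Finset.Nat.sum_antidiagonal_eq_sum_range_succ_mk]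
  simp [mulCoeff]

/-- The linear map `p ↦ p · f` from polynomials to coefficient sequences. -/
def polyMul (f : ℕ → ℂ) : ℂ[X] →ₗ[ℂ] (ℕ → ℂ) where
  toFun p := mulCoeff p.coeff f
  map_add' p q := by
    ext k
    simp [mulCoeff, add_mul, Finset.sum_add_distrib]
  map_smul' c p := by
    ext k
    simp [mulCoeff, mul_assoc, Finset.mul_sum]

theorem polyMul_apply (f : ℕ → ℂ) (p : ℂ[X]) : polyMul f p = mulCoeff p.coeff f := rfl

theorem polyMul_monomial (f : ℕ → ℂ) (t : ℕ) (c : ℂ) :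
    polyMul f (monomial t c) = c • shiftPow t f := by
  ext k
  rcases lt_or_ge k t with hkt | htk
  · simp [polyMul_apply, mulCoeff, shiftPow, coeff_monomial, hkt, hkt.not_ge]
  · simp [polyMul_apply, mulCoeff, shiftPow, coeff_monomial, htk, htk.not_gt]

theorem polyMul_ofFn (f : ℕ → ℂ) {n : ℕ} (c : Fin n → ℂ) :
    polyMul f (ofFn n c) = ∑ j, c j • shiftPow j f := by
  simp only [ofFn_eq_sum_monomial, map_sum, polyMul_monomial]

theorem polyMul_injective {f : ℕ → ℂ} (hf : f ≠ 0) : Function.Injective (polyMul f) := by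
  have hmk : PowerSeries.mk f ≠ 0 := fun h =>
    hf (funext fun k => by simpa using congrArg (PowerSeries.coeff k) h)
  refine (injective_iff_map_eq_zero _).2 fun p hp => ?_
  have hprod : (p : PowerSeries ℂ) * PowerSeries.mk f = 0 :=
    calc (p : PowerSeries ℂ) * PowerSeries.mk f
        = PowerSeries.mk p.coeff * PowerSeries.mk f := rfl
      _ = PowerSeries.mk (polyMul f p) := (mk_mulCoeff p.coeff f).symm
      _ = 0 := by rw [hp]; rfl
  exact coe_eq_zero_iff.1 ((mul_eq_zero.1 hprod).resolve_right hmk)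

theorem linearIndependent_shiftPow {f : ℕ → ℂ} (hf : f ≠ 0) :
    LinearIndependent ℂ fun t : ℕ => shiftPow t f := by
  have h := (basisMonomials ℂ).linearIndependent.map' (polyMul f)
    (LinearMap.ker_eq_bot.2 (polyMul_injective hf))
  simpa [Function.comp_def, polyMul_monomial] using h

end PolynomialMultiples

section NormalEquations

open Matrix Polynomial

/-- The vectors `S^j f`, `j ≤ d`, of `D_α`, embedded in `ℓ²`; `opaMatrix α d f` is their Gram
matrix. -/
def shiftVec {α : ℝ} {f : ℕ → ℂ} (hf : MemD α f) (d : ℕ) (j : Fin (d + 1)) :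
    lp (fun _ : ℕ => ℂ) 2 :=
  toEll2 α ⟨shiftPow j f, memD_shiftPow hf j⟩

variable {α : ℝ} {f : ℕ → ℂ}

theorem opaMatrix_eq_gram (hf : MemD α f) (d : ℕ) :
    opaMatrix α d f = Matrix.gram ℂ (shiftVec hf d) := by
  ext j k
  rw [Matrix.gram_apply, shiftVec, shiftVec, inner_toEll2, opaMatrix, Matrix.of_apply]

theorem linearIndependent_shiftVec (hf : MemD α f) (hf0 : f ≠ 0) (d : ℕ) :
    LinearIndependent ℂ (shiftVec hf d) := by
  have hshift : LinearIndependent ℂ fun j : Fin (d + 1) =>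
      (⟨shiftPow j f, memD_shiftPow hf j⟩ : dirichletSpace α) :=
    .of_comp (dirichletSpace α).subtype
      ((linearIndependent_shiftPow hf0).comp _ Fin.val_injective)
  exact hshift.map' (toEll2 α) (LinearMap.ker_eq_bot.2 (toEll2_injective α))

theorem isUnit_det_opaMatrix (hf : MemD α f) (hf0 : f ≠ 0) (d : ℕ) :
    IsUnit (opaMatrix α d f).det := by
  rw [opaMatrix_eq_gram hf, isUnit_iff_ne_zero]
  exact Matrix.det_gram_ne_zero_iff_linearIndependent.2 (linearIndependent_shiftVec hf hf0 d)

theorem norm_sum_smul_shiftVec_sub (hf : MemD α f) {d : ℕ} (c : Fin (d + 1) → ℂ) :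
    ‖∑ j, c j • shiftVec hf d j - toEll2 α ⟨oneCoeff, memD_oneCoeff α⟩‖ =
      DNorm α fun k => mulCoeff (ofFn (d + 1) c).coeff f k - oneCoeff k := by
  simp only [shiftVec, ← map_smul, ← map_sum, ← map_sub, norm_toEll2]
  congr 1
  ext k
  rw [← polyMul_apply, polyMul_ofFn]
  simp

theorem IsOPA.opaMatrix_mulVec_toFn {d : ℕ} {p : ℂ[X]} (hp : IsOPA α f d p) (hf : MemD α f) :
    opaMatrix α d f *ᵥ toFn (d + 1) p = opaVec α d f := by
  have hmin : ∀ c : Fin (d + 1) → ℂ,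
      ‖∑ j, toFn (d + 1) p j • shiftVec hf d j - toEll2 α ⟨oneCoeff, memD_oneCoeff α⟩‖ ≤
        ‖∑ j, c j • shiftVec hf d j - toEll2 α ⟨oneCoeff, memD_oneCoeff α⟩‖ := by
    intro c
    rw [norm_sum_smul_shiftVec_sub, norm_sum_smul_shiftVec_sub,
      ofFn_comp_toFn_eq_id_of_natDegree_lt (Nat.lt_succ_of_le hp.1)]
    exact hp.2 _ (Nat.le_of_lt_succ (ofFn_natDegree_lt d.succ_pos c))
  rw [opaMatrix_eq_gram hf, gram_mulVec_eq_of_forall_norm_sub_le hmin]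
  ext j
  rw [shiftVec, inner_toEll2, opaVec]

theorem dNorm_coeff_sub_le (α : ℝ) {d : ℕ} {p q : ℂ[X]} (hp : p.natDegree ≤ d)
    (hq : q.natDegree ≤ d) :
    DNorm α (fun k => q.coeff k - p.coeff k) ≤
      √(((d + 1 : ℕ) : ℝ) ^ |α|) * euclNorm (toFn (d + 1) q - toFn (d + 1) p) :=
  dNorm_le_of_forall_ge_eq_zero α fun k hk => by
    rw [coeff_eq_zero_of_natDegree_lt (hq.trans_lt hk),
      coeff_eq_zero_of_natDegree_lt (hp.trans_lt hk), sub_zero]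

end NormalEquations

/-- There is `ψ(d,α) > 0` such that for all nonzero `f, g ∈ D_α` with `d`-th optimal
polynomial approximants `p`, `q` to `1/f`, `1/g`,
`‖q - p‖_α ≤ ψ(d,α) ‖M(g)⁻¹‖_F (‖b(g) - b(f)‖ + ‖M(f)⁻¹‖_F ‖M(f) - M(g)‖_F ‖b(f)‖)`. -/
theorem opa_diff_estimate (α : ℝ) (d : ℕ) :
    ∃ ψ : ℝ, 0 < ψ ∧ ∀ f g : ℕ → ℂ, MemD α f → MemD α g → f ≠ 0 → g ≠ 0 →
      ∀ p q : Polynomial ℂ, IsOPA α f d p → IsOPA α g d q →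
        DNorm α (fun k => q.coeff k - p.coeff k) ≤
          ψ * frobNorm (opaMatrix α d g)⁻¹ *
            (euclNorm (fun j : Fin (d + 1) => opaVec α d g j - opaVec α d f j) +
              frobNorm (opaMatrix α d f)⁻¹ *
                frobNorm (opaMatrix α d f - opaMatrix α d g) *
                euclNorm (opaVec α d f)) := by
  refine ⟨√(((d + 1 : ℕ) : ℝ) ^ |α|), by positivity, fun f g hf hg hf0 hg0 p q hp hq => ?_⟩
  rw [mul_assoc]
  refine (dNorm_coeff_sub_le α hp.1 hq.1).trans ?_
  gcongr
  exact euclNorm_sub_le_of_mulVec_eq (isUnit_det_opaMatrix hf hf0 d) (isUnit_det_opaMatrix hg hg0 d)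
    (hp.opaMatrix_mulVec_toFn hf) (hq.opaMatrix_mulVec_toFn hg)
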